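/- Let rk be a rank function satisfying (A1)–(A4). If M, N, Q, A, B, C are points with rk{A,B,C} = 3, rk{A,B,M} = 2, rk{A,C,N} = 2 and rk{B,C,Q} = 2 (three points lying on the three edges of a nondegenerate triangle ABC), then rk{M,N,Q} ≥ 2; in particular at least two of the three points M, N, Q are distinct. -/

import Mathlib

/-!
Regard the rank as a monotone submodular function `f` on the lattice of finite sets. Let `m`, `n`,
`q` lie on the edges `ab`, `ac`, `bc`, and let `e = m ⊔ n ⊔ q`. Joining `e` to an edge raises its
rank by at most `f e` minus the rank of the point on it. The enlarged edges through `c` both lie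
above `c ⊔ e`, so submodularity bounds `f (c ⊔ e)`; the remaining enlarged edge meets `c ⊔ e` above
`e`, so submodularity bounds `f (a ⊔ b ⊔ c)`. Adding everything up gives one linear inequality,
which for ranks `3` (triangle), at most `2` (edges) and at least `1` (points) yields
`9 ≤ 6 + 2 * f e`.
-/

/-- A submodular function on a lattice, such as the rank function of a matroid on finite sets. -/
def IsSubmodular {L α : Type*} [Lattice L] [Add α] [LE α] (f : L → α) : Prop :=
  ∀ x y, f (x ⊔ y) + f (x ⊓ y) ≤ f x + f y

namespace IsSubmodular

variable {L α : Type*} [Lattice L] [AddCommMonoid α] [PartialOrder α]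

theorem add_le_add_of_le_sup_of_le_inf [IsOrderedAddMonoid α] {f : L → α} (hsub : IsSubmodular f)
    (hmono : Monotone f) {x y w z : L} (hw : w ≤ x ⊔ y) (hz : z ≤ x ⊓ y) :
    f w + f z ≤ f x + f y :=
  (add_le_add (hmono hw) (hmono hz)).trans (hsub x y)

theorem two_nsmul_triangle_add_points_le [IsOrderedCancelAddMonoid α] {f : L → α}
    (hsub : IsSubmodular f) (hmono : Monotone f) (a b c m n q : L) :
    2 • f (a ⊔ (b ⊔ c)) + (f m + f n + f q) ≤
      f (a ⊔ (b ⊔ m)) + f (a ⊔ (c ⊔ n)) + f (b ⊔ (c ⊔ q)) + 2 • f (m ⊔ (n ⊔ q)) := by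
  set e := m ⊔ (n ⊔ q)
  have hm : m ≤ e := le_sup_left
  have hn : n ≤ e := le_sup_of_le_right le_sup_left
  have hq : q ≤ e := le_sup_of_le_right le_sup_right
  have enlarge (x y p : L) (hp : p ≤ e) :
      f (x ⊔ y ⊔ e) + f p ≤ f (x ⊔ (y ⊔ p)) + f e :=
    hsub.add_le_add_of_le_sup_of_le_inf hmono (by order) (by order)
  have corner : f (a ⊔ (b ⊔ c)) + f (c ⊔ e) ≤ f (a ⊔ c ⊔ e) + f (b ⊔ c ⊔ e) :=
    hsub.add_le_add_of_le_sup_of_le_inf hmono (by order) (by order)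
  have triangle : f (a ⊔ (b ⊔ c)) + f e ≤ f (a ⊔ b ⊔ e) + f (c ⊔ e) :=
    hsub.add_le_add_of_le_sup_of_le_inf hmono (by order) (by order)
  refine le_of_add_le_add_right
    (a := f (a ⊔ b ⊔ e) + f (a ⊔ c ⊔ e) + f (b ⊔ c ⊔ e) + f (c ⊔ e) + f e) ?_
  calc
    _ = (f (a ⊔ b ⊔ e) + f m) + (f (a ⊔ c ⊔ e) + f n) + (f (b ⊔ c ⊔ e) + f q) +
        (f (a ⊔ (b ⊔ c)) + f (c ⊔ e)) + (f (a ⊔ (b ⊔ c)) + f e) := by abel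
    _ ≤ (f (a ⊔ (b ⊔ m)) + f e) + (f (a ⊔ (c ⊔ n)) + f e) + (f (b ⊔ (c ⊔ q)) + f e) +
        (f (a ⊔ c ⊔ e) + f (b ⊔ c ⊔ e)) + (f (a ⊔ b ⊔ e) + f (c ⊔ e)) :=
      add_le_add (add_le_add (add_le_add (add_le_add (enlarge a b m hm) (enlarge a c n hn))
        (enlarge b c q hq)) corner) triangle
    _ = _ := by abel

end IsSubmodular

theorem stmt_2_general {L : Type*} [Lattice L] {f : L → ℕ} (hmono : Monotone f)
    (hsub : IsSubmodular f) {a b c m n q : L} (hm : 1 ≤ f m) (hn : 1 ≤ f n) (hq : 1 ≤ f q)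
    (habc : 3 ≤ f (a ⊔ (b ⊔ c))) (habm : f (a ⊔ (b ⊔ m)) ≤ 2) (hacn : f (a ⊔ (c ⊔ n)) ≤ 2)
    (hbcq : f (b ⊔ (c ⊔ q)) ≤ 2) :
    2 ≤ f (m ⊔ (n ⊔ q)) := by
  have := hsub.two_nsmul_triangle_add_points_le hmono a b c m n q
  lia

/-- Three points lying on the three edges of a nondegenerate
triangle satisfy rk{M,N,Q} ≥ 2. -/
theorem stmt_2 {P : Type*} [DecidableEq P] (rk : Finset P → ℕ)
    (hA1 : ∀ X : Finset P, rk X ≤ X.card)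
    (hA2 : ∀ X Y : Finset P, X ⊆ Y → rk X ≤ rk Y)
    (hA3 : ∀ X Y : Finset P, rk (X ∪ Y) + rk (X ∩ Y) ≤ rk X + rk Y)
    (hA4 : ∀ p : P, rk {p} = 1)
    (M N Q A B C : P)
    (hABC : rk {A, B, C} = 3)
    (hABM : rk {A, B, M} = 2)
    (hACN : rk {A, C, N} = 2)
    (hBCQ : rk {B, C, Q} = 2) :
    2 ≤ rk {M, N, Q} := by
  simp only [Finset.insert_eq] at hABC hABM hACN hBCQ ⊢
  exact stmt_2_general hA2 hA3 (hA4 M).ge (hA4 N).ge (hA4 Q).ge hABC.ge hABM.le hACN.le hBCQ.le
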